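/- The Gramian map 𝒩₂ : L^∞((t₀,T);ℝ^k) → symmetric positive semidefinite d×d matrices is continuous, and it is globally Lipschitz on the ball 𝓑 := {u ∈ L^∞ : ‖u‖_∞ ≤ ζ₂}: assuming L_B ζ₂ ∉ {Λ₁, 2Λ₁}, for all u, v ∈ 𝓑 one has ‖𝒩₂(u) − 𝒩₂(v)‖ ≤ L_{𝒩₂} ‖u − v‖_∞ with the explicit constant L_{𝒩₂} := (L_B ‖B‖_∞² e^{Λ₁Δt₀}/Λ₁) · [ (e^{Λ₁Δt₀} − e^{L_Bζ₂Δt₀})/(Λ₁ − L_Bζ₂) − (e^{L_Bζ₂Δt₀} − e^{−Λ₁Δt₀})/(L_Bζ₂ + Λ₁) ] + (2‖B‖_∞³ Λ₂ e^{Λ₁Δt₀}/(Λ₁(Λ₁ + L_Bζ₂))) · [ (e^{2Λ₁Δt₀} − e^{L_Bζ₂Δt₀})/(2Λ₁ − L_Bζ₂) + (e^{Λ₁Δt₀} − e^{L_Bζ₂Δt₀})/(Λ₁ − L_Bζ₂) + (e^{Λ₁Δt₀} − e^{−Λ₁Δt₀})/(2Λ₁) − (e^{2Λ₁Δt₀}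 − e^{−Λ₁Δt₀})/(3Λ₁) ]. -/

import Mathlib

open Set intervalIntegral MeasureTheory Filter
open scoped RealInnerProductSpace

/-- `K_u(t) := DΦ_{t,τ}(x_u(t)) B(t, x_u(t))`. -/
noncomputable def Kker {d k : ℕ} (τ : ℝ)
    (DΦ : ℝ → ℝ → EuclideanSpace ℝ (Fin d) →
      (EuclideanSpace ℝ (Fin d) →L[ℝ] EuclideanSpace ℝ (Fin d)))
    (Bm : ℝ → EuclideanSpace ℝ (Fin d) →
      (EuclideanSpace ℝ (Fin k) →L[ℝ] EuclideanSpace ℝ (Fin d)))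
    (x : ℝ → EuclideanSpace ℝ (Fin d)) (t : ℝ) :
    EuclideanSpace ℝ (Fin k) →L[ℝ] EuclideanSpace ℝ (Fin d) :=
  (DΦ t τ (x t)).comp (Bm t (x t))

/-- The trajectory-dependent controllability Gramian
`𝒩 = ∫_{t₀}^T DΦ_{t,τ}(x_u(t)) B B^⊤ DΦ_{t,τ}(x_u(t))^⊤ dt`. -/
noncomputable def gram {d k : ℕ} (t₀ T τ : ℝ)
    (DΦ : ℝ → ℝ → EuclideanSpace ℝ (Fin d) →
      (EuclideanSpace ℝ (Fin d) →L[ℝ] EuclideanSpace ℝ (Fin d)))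
    (Bm : ℝ → EuclideanSpace ℝ (Fin d) →
      (EuclideanSpace ℝ (Fin k) →L[ℝ] EuclideanSpace ℝ (Fin d)))
    (x : ℝ → EuclideanSpace ℝ (Fin d)) :
    EuclideanSpace ℝ (Fin d) →L[ℝ] EuclideanSpace ℝ (Fin d) :=
  ∫ t in t₀..T,
    (Kker τ DΦ Bm x t).comp (ContinuousLinearMap.adjoint (Kker τ DΦ Bm x t))

/-- The map `L_{u,τ} v = ∫_{t₀}^T DΦ_{t,τ}(x_u(t)) B(t,x_u(t)) v(t) dt`. -/
noncomputable def Lmap {d k : ℕ} (t₀ T τ : ℝ)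
    (DΦ : ℝ → ℝ → EuclideanSpace ℝ (Fin d) →
      (EuclideanSpace ℝ (Fin d) →L[ℝ] EuclideanSpace ℝ (Fin d)))
    (Bm : ℝ → EuclideanSpace ℝ (Fin d) →
      (EuclideanSpace ℝ (Fin k) →L[ℝ] EuclideanSpace ℝ (Fin d)))
    (x : ℝ → EuclideanSpace ℝ (Fin d))
    (w : ℝ → EuclideanSpace ℝ (Fin k)) : EuclideanSpace ℝ (Fin d) :=
  ∫ t in t₀..T, (Kker τ DΦ Bm x t) (w t)

/-- The smallest eigenvalue of a symmetric operator, as the infimum of its Rayleigh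
quotient over the unit sphere. -/
noncomputable def lambdaMin {d : ℕ}
    (M : EuclideanSpace ℝ (Fin d) →L[ℝ] EuclideanSpace ℝ (Fin d)) : ℝ :=
  ⨅ x : Metric.sphere (0 : EuclideanSpace ℝ (Fin d)) 1,
    ⟪(x : EuclideanSpace ℝ (Fin d)), M x⟫

/-- The supremum of a real-valued function over `[t₀, T]` (the `L^∞((t₀,T))`-norm for
continuous representatives). -/
noncomputable def supIcc (t₀ T : ℝ) (f : ℝ → ℝ) : ℝ := sSup (f '' Icc t₀ T)

/-- A control is admissible when it is measurable and bounded on `[t₀, T]`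
(i.e. belongs to `L^∞((t₀,T);ℝ^k)`). -/
def Adm {k : ℕ} (t₀ T : ℝ) (u : ℝ → EuclideanSpace ℝ (Fin k)) : Prop :=
  Measurable u ∧ ∃ M : ℝ, ∀ t ∈ Icc t₀ T, ‖u t‖ ≤ M

/-- The feasible coercivity class `ℱ(C) = {u ∈ L^∞ : λ_min(𝒩(u)) ≥ C⁻¹}`. -/
def Fcl {d k : ℕ} (t₀ T τ C : ℝ)
    (DΦ : ℝ → ℝ → EuclideanSpace ℝ (Fin d) →
      (EuclideanSpace ℝ (Fin d) →L[ℝ] EuclideanSpace ℝ (Fin d)))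
    (Bm : ℝ → EuclideanSpace ℝ (Fin d) →
      (EuclideanSpace ℝ (Fin k) →L[ℝ] EuclideanSpace ℝ (Fin d)))
    (xSol : (ℝ → EuclideanSpace ℝ (Fin k)) → ℝ → EuclideanSpace ℝ (Fin d)) :
    Set (ℝ → EuclideanSpace ℝ (Fin k)) :=
  {u | Adm t₀ T u ∧ C⁻¹ ≤ lambdaMin (gram t₀ T τ DΦ Bm (xSol u))}

/-- The feasibility ball `ℱ(y) = {u ∈ ℱ(C) : ‖u‖_∞ ≤ ζ}` with
`ζ = C ‖B‖_∞ e^{Λ₁(T−t₀)} |y|`. -/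
def Fball {d k : ℕ} (t₀ T τ C Λ₁ Bsup : ℝ)
    (DΦ : ℝ → ℝ → EuclideanSpace ℝ (Fin d) →
      (EuclideanSpace ℝ (Fin d) →L[ℝ] EuclideanSpace ℝ (Fin d)))
    (Bm : ℝ → EuclideanSpace ℝ (Fin d) →
      (EuclideanSpace ℝ (Fin k) →L[ℝ] EuclideanSpace ℝ (Fin d)))
    (xSol : (ℝ → EuclideanSpace ℝ (Fin k)) → ℝ → EuclideanSpace ℝ (Fin d))
    (y : EuclideanSpace ℝ (Fin d)) :
    Set (ℝ → EuclideanSpace ℝ (Fin k)) :=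
  {u | u ∈ Fcl t₀ T τ C DΦ Bm xSol ∧
    ∀ t ∈ Icc t₀ T, ‖u t‖ ≤ C * Bsup * Real.exp (Λ₁ * (T - t₀)) * ‖y‖}

/-- The synthesis map `𝒮(u)(t) = B(t,x_u(t))^⊤ DΦ_{t,τ}(x_u(t))^⊤ 𝒩(u)⁻¹ y`. -/
noncomputable def Smap {d k : ℕ} (t₀ T τ : ℝ)
    (DΦ : ℝ → ℝ → EuclideanSpace ℝ (Fin d) →
      (EuclideanSpace ℝ (Fin d) →L[ℝ] EuclideanSpace ℝ (Fin d)))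
    (Bm : ℝ → EuclideanSpace ℝ (Fin d) →
      (EuclideanSpace ℝ (Fin k) →L[ℝ] EuclideanSpace ℝ (Fin d)))
    (xSol : (ℝ → EuclideanSpace ℝ (Fin k)) → ℝ → EuclideanSpace ℝ (Fin d))
    (y : EuclideanSpace ℝ (Fin d))
    (u : ℝ → EuclideanSpace ℝ (Fin k)) : ℝ → EuclideanSpace ℝ (Fin k) :=
  fun t => ContinuousLinearMap.adjoint (Kker τ DΦ Bm (xSol u) t)
    ((gram t₀ T τ DΦ Bm (xSol u)).inverse y)

/-!
Write `K_x(t) = DΦ_{t,T}(x(t)) B(t, x(t))`, so that the Gramian along the path `x` is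
`∫ K_x(t) K_x(t)* dt`. Grönwall's inequality for the flow and its variational equation gives
`‖DΦ_{t,T}‖ ≤ e^{Λ₁(T-t)}`, and makes `DΦ_{t,T}` Lipschitz in space with constant
`Λ₂ e^{Λ₁(T-t)} (e^{Λ₁(T-t)} - 1) / Λ₁`; hence `K` is bounded and Lipschitz in the state.
Grönwall's inequality for the controlled system gives, as soon as `‖u‖ ≤ ζ`,
`‖x_u(t) - x_v(t)‖ ≤ ‖B‖ (e^{(Λ₁ + L_B ζ)(t-t₀)} - 1) / (Λ₁ + L_B ζ) · ‖u - v‖`. Inserting both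
bounds in `‖K K* - K' K'*‖ ≤ (‖K‖ + ‖K'‖) ‖K - K'‖` leaves an integral of exponentials, which is at
most the constant of the theorem. The Gramian integrand is measurable because the cocycle identity
`DΦ_{s,T}(x) = DΦ_{t,T}(Φ_{s,t}(x)) DΦ_{s,t}(x)` makes `t ↦ DΦ_{t,T}(x(t))` continuous.
Continuity of the Gramian map follows, since every control lies in some ball.
-/

open scoped NNReal

section Gronwall

variable {E : Type*} [NormedAddCommGroup E] [NormedSpace ℝ E] {a b δ K ε : ℝ}

@[fun_prop]
theorem continuous_gronwallBound : Continuous (gronwallBound δ K ε) :=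
  continuous_iff_continuousAt.2 fun t => (hasDerivAt_gronwallBound δ K ε t).continuousAt

theorem gronwallBound_zero_eq_mul (K ε t : ℝ) :
    gronwallBound 0 K ε t = gronwallBound 0 K 1 t * ε := by
  unfold gronwallBound
  split_ifs <;> ring

theorem gronwallBound_nonneg (hδ : 0 ≤ δ) (hK : 0 ≤ K) (hε : 0 ≤ ε) {t : ℝ} (ht : 0 ≤ t) :
    0 ≤ gronwallBound δ K ε t :=
  calc 0 ≤ gronwallBound δ K ε 0 := hδ.trans_eq (gronwallBound_x0 δ K ε).symm
    _ ≤ gronwallBound δ K ε t := gronwallBound_mono hδ hε hK ht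

theorem mul_gronwallBound_zero_one_add_one (K t : ℝ) :
    K * gronwallBound 0 K 1 t + 1 = Real.exp (K * t) := by
  rcases eq_or_ne K 0 with rfl | hK
  · simp
  · rw [gronwallBound_of_K_ne_0 hK]
    field_simp
    ring

theorem norm_le_of_norm_deriv_le_mul_add {f f' : ℝ → E} {h B B' : ℝ → ℝ}
    (hf : ∀ t ∈ Icc a b, HasDerivWithinAt f (f' t) (Icc a b) t)
    (hf' : ∀ t ∈ Ico a b, ‖f' t‖ ≤ K * ‖f t‖ + h t)
    (hB : ∀ t, HasDerivAt B (B' t) t) (hB' : ∀ t ∈ Ico a b, K * B t + h t ≤ B' t)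
    (ha : ‖f a‖ ≤ B a) {t : ℝ} (ht : t ∈ Icc a b) : ‖f t‖ ≤ B t := by
  set e : ℝ → ℝ := fun t => Real.exp ((K + 1) * (t - a))
  have he : ∀ t, 0 < e t := fun t => Real.exp_pos _
  have hde : ∀ t, HasDerivAt e (e t * ((K + 1) * 1)) t := fun t =>
    (((hasDerivAt_id t).sub_const a).const_mul (K + 1)).exp
  -- The strict supersolution `B + ε e` turns the weak differential inequality into a strict one.
  have hstrict : ∀ ε > 0, ‖f t‖ ≤ B t + ε * e t := by
    intro ε hε
    refine image_norm_le_of_norm_deriv_right_lt_deriv_boundary (B := fun s => B s + ε * e s)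
      (fun s hs => (hf s hs).continuousWithinAt)
      (fun s hs => (hf s (Ico_subset_Icc_self hs)).mono_of_mem_nhdsWithin
        (Icc_mem_nhdsGE_of_mem hs)) (ha.trans ?_)
      (fun s => (hB s).add ((hde s).const_mul ε)) (fun s hs hfs => ?_) ht
    · exact le_add_of_nonneg_right (mul_pos hε (he a)).le
    · calc ‖f' s‖ ≤ K * (B s + ε * e s) + h s := hfs ▸ hf' s hs
        _ < B' s + ε * (e s * ((K + 1) * 1)) := by
          linarith [hB' s hs, mul_pos hε (he s)]
  refine le_of_forall_pos_le_add fun ε hε => ?_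
  simpa only [div_mul_cancel₀ ε (he t).ne'] using hstrict (ε / e t) (div_pos hε (he t))

theorem norm_le_norm_mul_exp_of_norm_deriv_le {f f' : ℝ → E}
    (hf : ∀ t ∈ Icc a b, HasDerivWithinAt f (f' t) (Icc a b) t)
    (hf' : ∀ t ∈ Ico a b, ‖f' t‖ ≤ K * ‖f t‖) {t : ℝ} (ht : t ∈ Icc a b) :
    ‖f t‖ ≤ ‖f a‖ * Real.exp (K * (t - a)) := by
  rw [← gronwallBound_ε0]
  exact norm_le_gronwallBound_of_norm_deriv_right_le
    (fun s hs => (hf s hs).continuousWithinAt)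
    (fun s hs => (hf s (Ico_subset_Icc_self hs)).mono_of_mem_nhdsWithin (Icc_mem_nhdsGE_of_mem hs))
    le_rfl (by simpa only [add_zero] using hf') t ht

theorem le_gronwallBound_of_le_integral {z : ℝ → ℝ} (hK : 0 ≤ K) (hz : ContinuousOn z (Icc a b))
    (hle : ∀ t ∈ Icc a b, z t ≤ δ + ∫ s in a..t, (K * z s + ε)) {t : ℝ} (ht : t ∈ Icc a b) :
    z t ≤ gronwallBound δ K ε (t - a) := by
  have hab : a ≤ b := ht.1.trans ht.2
  set y : ℝ → ℝ := IccExtend hab ((Icc a b).domRestrict z)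
  have hy : Continuous y := (continuousOn_iff_continuous_domRestrict.1 hz).Icc_extend'
  have hyz : EqOn y z (Icc a b) := fun s hs => IccExtend_of_mem hab _ hs
  set w : ℝ → ℝ := fun r => δ + ∫ s in a..r, (K * y s + ε)
  have hw : ∀ r, HasDerivAt w (K * y r + ε) r := fun r =>
    ((Continuous.integral_hasStrictDerivAt (by fun_prop) a r).hasDerivAt).const_add δ
  have hzw : ∀ r ∈ Icc a b, z r ≤ w r := by
    intro r hr
    refine (hle r hr).trans_eq (congrArg (δ + ·) (integral_congr fun s hs => ?_))
    rw [uIcc_of_le hr.1] at hs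
    exact congrArg (K * · + ε) (hyz ⟨hs.1, hs.2.trans hr.2⟩).symm
  refine (hzw t ht).trans (le_gronwallBound_of_liminf_deriv_right_le
    (fun r _ => (hw r).continuousAt.continuousWithinAt)
    (fun r _ _ hr => (hw r).hasDerivWithinAt.liminf_right_slope_le hr)
    (by simp [w]) (fun r hr => ?_) t ht)
  have hr' := Ico_subset_Icc_self hr
  rw [hyz hr']
  gcongr
  exact hzw r hr'

end Gronwall

section Caratheodory

variable {E G : Type*} [TopologicalSpace E] {t₀ T : ℝ}

-- With `x` extended continuously, `(s, t) ↦ f t (x s)` is a Carathéodory function on `ℝ × ℝ`, to be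
-- restricted to the diagonal.
theorem aestronglyMeasurable_comp_of_caratheodory [TopologicalSpace G]
    [TopologicalSpace.PseudoMetrizableSpace G] {f : ℝ → E → G}
    (hf : ∀ x, StronglyMeasurable (f · x)) (hfc : ∀ t, Continuous (f t)) {x : ℝ → E}
    (hx : ContinuousOn x (Icc t₀ T)) :
    AEStronglyMeasurable (fun t => f t (x t)) (volume.restrict (Icc t₀ T)) := by
  rcases lt_or_ge T t₀ with h | h
  · simp [Icc_eq_empty_of_lt h]
  set y : ℝ → E := IccExtend h ((Icc t₀ T).domRestrict x)
  have hy : Continuous y := (continuousOn_iff_continuous_domRestrict.1 hx).Icc_extend'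
  have hfy : StronglyMeasurable (Function.uncurry fun s t => f t (y s)) :=
    stronglyMeasurable_uncurry_of_continuous_of_stronglyMeasurable
      (fun t => (hfc t).comp hy) (fun s => hf (y s))
  refine (hfy.comp_measurable (measurable_id.prodMk measurable_id)).aestronglyMeasurable.congr ?_
  filter_upwards [ae_restrict_mem measurableSet_Icc] with t ht
  exact congrArg (f t) (IccExtend_of_mem h _ ht)

theorem intervalIntegrable_of_norm_le [NormedAddCommGroup G] {f : ℝ → G} {C : ℝ} (h : t₀ ≤ T)
    (hf : AEStronglyMeasurable f (volume.restrict (Icc t₀ T)))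
    (hC : ∀ t ∈ Icc t₀ T, ‖f t‖ ≤ C) : IntervalIntegrable f volume t₀ T :=
  (intervalIntegrable_iff_integrableOn_Icc_of_le h).2 <|
    IntegrableOn.of_bound measure_Icc_lt_top hf C <|
      (ae_restrict_mem measurableSet_Icc).mono hC

end Caratheodory

section Flow

variable {E : Type*} [NormedAddCommGroup E] [NormedSpace ℝ E] {t₀ T : ℝ} {N : ℝ → E → E}
  {Φ : ℝ → ℝ → E → E}

/-- The nonautonomous flow of a differentiable field `N` over `[t₀, T]`: `Φ s t` carries the state
at time `s` to the state at time `t`, forwards or backwards in time. Differentiability in space is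
recorded together with the first variational equation; derivatives in time at the endpoints are
one-sided. -/
structure IsDifferentiableFlow (t₀ T : ℝ) (N : ℝ → E → E) (Φ : ℝ → ℝ → E → E) : Prop where
  differentiable_field : ∀ t, Differentiable ℝ (N t)
  differentiable : ∀ s t, Differentiable ℝ (Φ s t)
  self : ∀ s x, Φ s s x = x
  trans : ∀ r s t x, Φ s t (Φ r s x) = Φ r t x
  hasDerivWithinAt : ∀ s ∈ Icc t₀ T, ∀ x, ∀ t ∈ Icc t₀ T,
    HasDerivWithinAt (fun r => Φ s r x) (N t (Φ s t x)) (Icc t₀ T) t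
  hasDerivWithinAt_fderiv : ∀ s ∈ Icc t₀ T, ∀ x, ∀ t ∈ Icc t₀ T,
    HasDerivWithinAt (fun r => fderiv ℝ (Φ s r) x)
      ((fderiv ℝ (N t) (Φ s t x)).comp (fderiv ℝ (Φ s t) x)) (Icc t₀ T) t

/-- The Lipschitz constant in space of the derivative of a flow over a time span `r`, when the field
is `Λ₁`-Lipschitz with `Λ₂`-Lipschitz derivative. It is the value at `r` of the solution of
`c' = Λ₁ c + Λ₂ e^{2 Λ₁ r}`, `c 0 = 0`. -/
noncomputable def flowDerivLipschitzConst (Λ₁ Λ₂ r : ℝ) : ℝ :=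
  Λ₂ * Real.exp (Λ₁ * r) * gronwallBound 0 Λ₁ 1 r

theorem flowDerivLipschitzConst_nonneg {Λ₁ Λ₂ r : ℝ} (hΛ₁ : 0 ≤ Λ₁) (hΛ₂ : 0 ≤ Λ₂) (hr : 0 ≤ r) :
    0 ≤ flowDerivLipschitzConst Λ₁ Λ₂ r :=
  mul_nonneg (by positivity) (gronwallBound_nonneg le_rfl hΛ₁ zero_le_one hr)

@[fun_prop]
theorem continuous_flowDerivLipschitzConst (Λ₁ Λ₂ : ℝ) :
    Continuous (flowDerivLipschitzConst Λ₁ Λ₂) := by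
  unfold flowDerivLipschitzConst
  fun_prop

theorem hasDerivAt_flowDerivLipschitzConst (Λ₁ Λ₂ r : ℝ) :
    HasDerivAt (flowDerivLipschitzConst Λ₁ Λ₂)
      (Λ₁ * flowDerivLipschitzConst Λ₁ Λ₂ r
        + Λ₂ * Real.exp (Λ₁ * r) * Real.exp (Λ₁ * r)) r := by
  have hexp : HasDerivAt (fun r => Λ₂ * Real.exp (Λ₁ * r))
      (Λ₂ * (Real.exp (Λ₁ * r) * (Λ₁ * 1))) r :=
    ((hasDerivAt_id r).const_mul Λ₁).exp.const_mul Λ₂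
  refine (hexp.mul (hasDerivAt_gronwallBound 0 Λ₁ 1 r)).congr_deriv ?_
  rw [mul_gronwallBound_zero_one_add_one, flowDerivLipschitzConst]
  ring

namespace IsDifferentiableFlow

variable {Λ₁ Λ₂ : ℝ≥0}

theorem fderiv_self (hΦ : IsDifferentiableFlow t₀ T N Φ) (s : ℝ) (x : E) :
    fderiv ℝ (Φ s s) x = ContinuousLinearMap.id ℝ E := by
  rw [funext (hΦ.self s), fderiv_fun_id]

theorem fderiv_trans (hΦ : IsDifferentiableFlow t₀ T N Φ) (r s t : ℝ) (x : E) :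
    fderiv ℝ (Φ r t) x = (fderiv ℝ (Φ s t) (Φ r s x)).comp (fderiv ℝ (Φ r s) x) := by
  rw [← fderiv_comp x (hΦ.differentiable s t _) (hΦ.differentiable r s x)]
  exact congrArg (fderiv ℝ · x) (funext fun y => (hΦ.trans r s t y).symm)

theorem norm_fderiv_field_le (hΦ : IsDifferentiableFlow t₀ T N Φ)
    (hN : ∀ t, LipschitzWith Λ₁ (N t)) (t : ℝ) (x : E) : ‖fderiv ℝ (N t) x‖ ≤ Λ₁ :=
  (hΦ.differentiable_field t x).hasFDerivAt.le_of_lipschitz (hN t)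

theorem norm_sub_le (hΦ : IsDifferentiableFlow t₀ T N Φ) (hN : ∀ t, LipschitzWith Λ₁ (N t))
    {s t : ℝ} (hs : s ∈ Icc t₀ T) (ht : t ∈ Icc s T) (x y : E) :
    ‖Φ s t x - Φ s t y‖ ≤ ‖x - y‖ * Real.exp (Λ₁ * (t - s)) := by
  have hsub : Icc s T ⊆ Icc t₀ T := Icc_subset_Icc_left hs.1
  simpa only [hΦ.self] using norm_le_norm_mul_exp_of_norm_deriv_le
    (f := fun r => Φ s r x - Φ s r y) (f' := fun r => N r (Φ s r x) - N r (Φ s r y))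
    (fun r hr => ((hΦ.hasDerivWithinAt s hs x r (hsub hr)).sub
      (hΦ.hasDerivWithinAt s hs y r (hsub hr))).mono hsub)
    (fun r _ => (hN r).norm_sub_le _ _) ht

theorem norm_fderiv_le (hΦ : IsDifferentiableFlow t₀ T N Φ) (hN : ∀ t, LipschitzWith Λ₁ (N t))
    {s t : ℝ} (hs : s ∈ Icc t₀ T) (ht : t ∈ Icc s T) (x : E) :
    ‖fderiv ℝ (Φ s t) x‖ ≤ Real.exp (Λ₁ * (t - s)) := by
  have hsub : Icc s T ⊆ Icc t₀ T := Icc_subset_Icc_left hs.1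
  have hgrowth : ‖fderiv ℝ (Φ s t) x‖ ≤ ‖fderiv ℝ (Φ s s) x‖ * Real.exp (Λ₁ * (t - s)) :=
    norm_le_norm_mul_exp_of_norm_deriv_le
      (fun r hr => (hΦ.hasDerivWithinAt_fderiv s hs x r (hsub hr)).mono hsub)
      (fun r _ => (ContinuousLinearMap.opNorm_comp_le _ _).trans
        (mul_le_mul_of_nonneg_right (hΦ.norm_fderiv_field_le hN r _) (norm_nonneg _))) ht
  rw [hΦ.fderiv_self] at hgrowth
  exact hgrowth.trans
    (mul_le_of_le_one_left (Real.exp_pos _).le ContinuousLinearMap.norm_id_le)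

theorem norm_variational_sub_le (hΦ : IsDifferentiableFlow t₀ T N Φ)
    (hN : ∀ t, LipschitzWith Λ₁ (N t)) (hDN : ∀ t, LipschitzWith Λ₂ (fderiv ℝ (N t)))
    {s t : ℝ} (hs : s ∈ Icc t₀ T) (ht : t ∈ Icc s T) (x y : E) :
    ‖(fderiv ℝ (N t) (Φ s t x)).comp (fderiv ℝ (Φ s t) x)
        - (fderiv ℝ (N t) (Φ s t y)).comp (fderiv ℝ (Φ s t) y)‖
      ≤ Λ₁ * ‖fderiv ℝ (Φ s t) x - fderiv ℝ (Φ s t) y‖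
        + Λ₂ * Real.exp (Λ₁ * (t - s)) * Real.exp (Λ₁ * (t - s)) * ‖x - y‖ := by
  have hsplit : (fderiv ℝ (N t) (Φ s t x)).comp (fderiv ℝ (Φ s t) x)
        - (fderiv ℝ (N t) (Φ s t y)).comp (fderiv ℝ (Φ s t) y)
      = (fderiv ℝ (N t) (Φ s t x)).comp (fderiv ℝ (Φ s t) x - fderiv ℝ (Φ s t) y)
        + (fderiv ℝ (N t) (Φ s t x) - fderiv ℝ (N t) (Φ s t y)).comp (fderiv ℝ (Φ s t) y) := by
    simp only [ContinuousLinearMap.comp_sub, ContinuousLinearMap.sub_comp, sub_add_sub_cancel]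
  have hfield : ‖fderiv ℝ (N t) (Φ s t x) - fderiv ℝ (N t) (Φ s t y)‖
      ≤ Λ₂ * (‖x - y‖ * Real.exp (Λ₁ * (t - s))) :=
    ((hDN t).norm_sub_le _ _).trans
      (mul_le_mul_of_nonneg_left (hΦ.norm_sub_le hN hs ht x y) Λ₂.2)
  rw [hsplit]
  calc _ ≤ ‖fderiv ℝ (N t) (Φ s t x)‖ * ‖fderiv ℝ (Φ s t) x - fderiv ℝ (Φ s t) y‖
        + ‖fderiv ℝ (N t) (Φ s t x) - fderiv ℝ (N t) (Φ s t y)‖ * ‖fderiv ℝ (Φ s t) y‖ :=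
      norm_add_le_of_le (ContinuousLinearMap.opNorm_comp_le _ _)
        (ContinuousLinearMap.opNorm_comp_le _ _)
    _ ≤ Λ₁ * ‖fderiv ℝ (Φ s t) x - fderiv ℝ (Φ s t) y‖
        + Λ₂ * (‖x - y‖ * Real.exp (Λ₁ * (t - s))) * Real.exp (Λ₁ * (t - s)) := by
      gcongr
      · exact hΦ.norm_fderiv_field_le hN t _
      · exact hΦ.norm_fderiv_le hN hs ht y
    _ = _ := by ring

theorem norm_fderiv_sub_le (hΦ : IsDifferentiableFlow t₀ T N Φ)
    (hN : ∀ t, LipschitzWith Λ₁ (N t)) (hDN : ∀ t, LipschitzWith Λ₂ (fderiv ℝ (N t)))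
    {s t : ℝ} (hs : s ∈ Icc t₀ T) (ht : t ∈ Icc s T) (x y : E) :
    ‖fderiv ℝ (Φ s t) x - fderiv ℝ (Φ s t) y‖
      ≤ flowDerivLipschitzConst Λ₁ Λ₂ (t - s) * ‖x - y‖ := by
  have hsub : Icc s T ⊆ Icc t₀ T := Icc_subset_Icc_left hs.1
  refine norm_le_of_norm_deriv_le_mul_add
    (f := fun r => fderiv ℝ (Φ s r) x - fderiv ℝ (Φ s r) y)
    (B := fun r => flowDerivLipschitzConst Λ₁ Λ₂ (r - s) * ‖x - y‖)
    (fun r hr => ((hΦ.hasDerivWithinAt_fderiv s hs x r (hsub hr)).sub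
      (hΦ.hasDerivWithinAt_fderiv s hs y r (hsub hr))).mono hsub)
    (fun r hr => hΦ.norm_variational_sub_le hN hDN hs (Ico_subset_Icc_self hr) x y)
    (fun r => ((hasDerivAt_flowDerivLipschitzConst Λ₁ Λ₂ (r - s)).comp_sub_const r s).mul_const _)
    (fun r _ => (by ring : _ = _).le) ?_ ht
  simp [hΦ.fderiv_self, flowDerivLipschitzConst, gronwallBound_x0]

theorem norm_fderiv_sub_fderiv_le (hΦ : IsDifferentiableFlow t₀ T N Φ)
    (hN : ∀ t, LipschitzWith Λ₁ (N t)) (hDN : ∀ t, LipschitzWith Λ₂ (fderiv ℝ (N t)))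
    {t : ℝ} (ht : t ∈ Icc t₀ T) (s : ℝ) (x y : E) :
    ‖fderiv ℝ (Φ t T) y - fderiv ℝ (Φ s T) x‖
      ≤ flowDerivLipschitzConst Λ₁ Λ₂ (T - t) * ‖y - Φ s t x‖
        + Real.exp (Λ₁ * (T - t)) * ‖ContinuousLinearMap.id ℝ E - fderiv ℝ (Φ s t) x‖ := by
  have hT : T ∈ Icc t T := right_mem_Icc.2 ht.2
  have hsplit : fderiv ℝ (Φ t T) y - fderiv ℝ (Φ s T) x
      = (fderiv ℝ (Φ t T) y - fderiv ℝ (Φ t T) (Φ s t x))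
        + (fderiv ℝ (Φ t T) (Φ s t x)).comp
            (ContinuousLinearMap.id ℝ E - fderiv ℝ (Φ s t) x) := by
    rw [hΦ.fderiv_trans s t T x, ContinuousLinearMap.comp_sub, ContinuousLinearMap.comp_id,
      sub_add_sub_cancel]
  rw [hsplit]
  refine norm_add_le_of_le (hΦ.norm_fderiv_sub_le hN hDN ht hT _ _)
    ((ContinuousLinearMap.opNorm_comp_le _ _).trans ?_)
  gcongr
  exact hΦ.norm_fderiv_le hN ht hT _

theorem continuousOn_fderiv_comp (hΦ : IsDifferentiableFlow t₀ T N Φ)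
    (hN : ∀ t, LipschitzWith Λ₁ (N t)) (hDN : ∀ t, LipschitzWith Λ₂ (fderiv ℝ (N t)))
    {x : ℝ → E} (hx : ContinuousOn x (Icc t₀ T)) :
    ContinuousOn (fun t => fderiv ℝ (Φ t T) (x t)) (Icc t₀ T) := by
  intro s hs
  set b : ℝ → ℝ := fun t => flowDerivLipschitzConst Λ₁ Λ₂ (T - t) * ‖x t - Φ s t (x s)‖
    + Real.exp (Λ₁ * (T - t)) * ‖ContinuousLinearMap.id ℝ E - fderiv ℝ (Φ s t) (x s)‖
  have hb : ContinuousWithinAt b (Icc t₀ T) s := by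
    have hflow := (hΦ.hasDerivWithinAt s hs (x s) s hs).continuousWithinAt
    have hderiv := (hΦ.hasDerivWithinAt_fderiv s hs (x s) s hs).continuousWithinAt
    have hcoeff : Continuous fun t => flowDerivLipschitzConst Λ₁ Λ₂ (T - t) := by fun_prop
    have hexp : Continuous fun t => Real.exp (Λ₁ * (T - t)) := by fun_prop
    exact (hcoeff.continuousWithinAt.mul ((hx s hs).sub hflow).norm).add
      (hexp.continuousWithinAt.mul (continuousWithinAt_const.sub hderiv).norm)
  have hbs : b s = 0 := by simp [b, hΦ.self, hΦ.fderiv_self]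
  rw [ContinuousWithinAt, tendsto_iff_norm_sub_tendsto_zero]
  refine squeeze_zero' (Eventually.of_forall fun _ => norm_nonneg _) ?_ (hbs ▸ hb.tendsto)
  filter_upwards [self_mem_nhdsWithin] with t ht
  exact hΦ.norm_fderiv_sub_fderiv_le hN hDN ht s (x s) (x t)

end IsDifferentiableFlow

end Flow

section Trajectory

variable {E F : Type*} [NormedAddCommGroup E] [NormedSpace ℝ E] [NormedAddCommGroup F]
  [NormedSpace ℝ F] {t₀ T : ℝ} {Λ₁ L β : ℝ≥0} {N : ℝ → E → E} {B : ℝ → E → F →L[ℝ] E} {x₀ : E}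
  {u v : ℝ → F} {x y : ℝ → E}

/-- The control-affine system `ẋ = N_t(x) + B(t, x) u` with coefficients measurable in time and
Lipschitz in space, and with input operator bounded by `β` on `[t₀, T]`. Boundedness of the drift
on `[t₀, T]` is only imposed at the origin, as the Lipschitz condition propagates it. -/
structure IsControlSystem (t₀ T : ℝ) (Λ₁ L β : ℝ≥0) (N : ℝ → E → E) (B : ℝ → E → F →L[ℝ] E) :
    Prop where
  stronglyMeasurable_drift : ∀ x, StronglyMeasurable (N · x)
  bounded_drift : ∃ M : ℝ, ∀ t ∈ Icc t₀ T, ‖N t 0‖ ≤ M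
  lipschitzWith_drift : ∀ t, LipschitzWith Λ₁ (N t)
  stronglyMeasurable_input : ∀ x, StronglyMeasurable (B · x)
  norm_input_le : ∀ t ∈ Icc t₀ T, ∀ x, ‖B t x‖ ≤ β
  lipschitzWith_input : ∀ t, LipschitzWith L (B t)

/-- The path `x` is the Carathéodory solution on `[t₀, T]` of `ẋ = N_t(x) + B(t, x) u` with
`x(t₀) = x₀` for the measurable bounded control `u`; the equation is stated in integral form. -/
structure IsTrajectory (t₀ T : ℝ) (N : ℝ → E → E) (B : ℝ → E → F →L[ℝ] E) (x₀ : E) (u : ℝ → F)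
    (x : ℝ → E) : Prop where
  stronglyMeasurable_control : StronglyMeasurable u
  bounded_control : ∃ M : ℝ, ∀ t ∈ Icc t₀ T, ‖u t‖ ≤ M
  continuousOn : ContinuousOn x (Icc t₀ T)
  eq_integral : ∀ t ∈ Icc t₀ T, x t = x₀ + ∫ s in t₀..t, (N s (x s) + B s (x s) (u s))

theorem IsControlSystem.norm_velocity_sub_le (hS : IsControlSystem t₀ T Λ₁ L β N B) {ζ δ t : ℝ}
    (ht : t ∈ Icc t₀ T) (p q : E) {a b : F} (ha : ‖a‖ ≤ ζ) (hab : ‖a - b‖ ≤ δ) :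
    ‖(N t p + B t p a) - (N t q + B t q b)‖ ≤ (Λ₁ + L * ζ) * ‖p - q‖ + β * δ := by
  have hsplit : (N t p + B t p a) - (N t q + B t q b)
      = (N t p - N t q) + (B t p - B t q) a + B t q (a - b) := by
    rw [sub_apply, map_sub]
    abel
  have hdrift : ‖N t p - N t q‖ ≤ Λ₁ * ‖p - q‖ := (hS.lipschitzWith_drift t).norm_sub_le p q
  have hstate : ‖(B t p - B t q) a‖ ≤ L * ‖p - q‖ * ζ :=
    ContinuousLinearMap.le_of_opNorm_le_of_le _ ((hS.lipschitzWith_input t).norm_sub_le p q) ha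
  have hcontrol : ‖B t q (a - b)‖ ≤ β * δ :=
    ContinuousLinearMap.le_of_opNorm_le_of_le _ (hS.norm_input_le t ht q) hab
  rw [hsplit]
  exact (norm_add₃_le.trans (add_le_add_three hdrift hstate hcontrol)).trans_eq (by ring)

namespace IsTrajectory

theorem aestronglyMeasurable_velocity (hx : IsTrajectory t₀ T N B x₀ u x)
    (hS : IsControlSystem t₀ T Λ₁ L β N B) :
    AEStronglyMeasurable (fun s => N s (x s) + B s (x s) (u s)) (volume.restrict (Icc t₀ T)) := by
  have hdrift : AEStronglyMeasurable (fun s => N s (x s)) (volume.restrict (Icc t₀ T)) :=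
    aestronglyMeasurable_comp_of_caratheodory hS.stronglyMeasurable_drift
      (fun t => (hS.lipschitzWith_drift t).continuous) hx.continuousOn
  have hinput : AEStronglyMeasurable (fun s => B s (x s)) (volume.restrict (Icc t₀ T)) :=
    aestronglyMeasurable_comp_of_caratheodory hS.stronglyMeasurable_input
      (fun t => (hS.lipschitzWith_input t).continuous) hx.continuousOn
  exact hdrift.add (isBoundedBilinearMap_apply.continuous.comp_aestronglyMeasurable
    (hinput.prodMk hx.stronglyMeasurable_control.aestronglyMeasurable))

theorem bounded_velocity (hx : IsTrajectory t₀ T N B x₀ u x)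
    (hS : IsControlSystem t₀ T Λ₁ L β N B) :
    ∃ C : ℝ, ∀ s ∈ Icc t₀ T, ‖N s (x s) + B s (x s) (u s)‖ ≤ C := by
  obtain ⟨Mu, hMu⟩ := hx.bounded_control
  obtain ⟨Mx, hMx⟩ := isCompact_Icc.exists_bound_of_continuousOn hx.continuousOn
  obtain ⟨MN, hMN⟩ := hS.bounded_drift
  refine ⟨MN + Λ₁ * Mx + β * Mu, fun s hs => norm_add_le_of_le ?_
    (ContinuousLinearMap.le_of_opNorm_le_of_le _ (hS.norm_input_le s hs _) (hMu s hs))⟩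
  calc ‖N s (x s)‖ ≤ ‖N s 0‖ + ‖N s (x s) - N s 0‖ := norm_le_norm_add_norm_sub' _ _
    _ ≤ MN + Λ₁ * ‖x s - 0‖ := add_le_add (hMN s hs) ((hS.lipschitzWith_drift s).norm_sub_le _ _)
    _ ≤ MN + Λ₁ * Mx := by
      rw [sub_zero]
      gcongr
      exact hMx s hs

theorem intervalIntegrable_velocity (hx : IsTrajectory t₀ T N B x₀ u x)
    (hS : IsControlSystem t₀ T Λ₁ L β N B) {t : ℝ} (ht : t ∈ Icc t₀ T) :
    IntervalIntegrable (fun s => N s (x s) + B s (x s) (u s)) volume t₀ t := by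
  obtain ⟨C, hC⟩ := hx.bounded_velocity hS
  have hsub : Icc t₀ t ⊆ Icc t₀ T := Icc_subset_Icc_right ht.2
  exact intervalIntegrable_of_norm_le ht.1 ((hx.aestronglyMeasurable_velocity hS).mono_set hsub)
    fun s hs => hC s (hsub hs)

theorem norm_sub_le (hx : IsTrajectory t₀ T N B x₀ u x) (hy : IsTrajectory t₀ T N B x₀ v y)
    (hS : IsControlSystem t₀ T Λ₁ L β N B) {ζ : ℝ≥0} {δ : ℝ} (hu : ∀ t ∈ Icc t₀ T, ‖u t‖ ≤ ζ)
    (huv : ∀ t ∈ Icc t₀ T, ‖u t - v t‖ ≤ δ) {t : ℝ} (ht : t ∈ Icc t₀ T) :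
    ‖x t - y t‖ ≤ gronwallBound 0 (Λ₁ + L * ζ) 1 (t - t₀) * (β * δ) := by
  rw [← gronwallBound_zero_eq_mul]
  have hdist : ContinuousOn (fun s => ‖x s - y s‖) (Icc t₀ T) :=
    (hx.continuousOn.sub hy.continuousOn).norm
  refine le_gronwallBound_of_le_integral (z := fun s => ‖x s - y s‖) (by positivity) hdist
    (fun r hr => ?_) ht
  have hsub : Icc t₀ r ⊆ Icc t₀ T := Icc_subset_Icc_right hr.2
  rw [hx.eq_integral r hr, hy.eq_integral r hr, add_sub_add_left_eq_sub, zero_add,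
    ← integral_sub (hx.intervalIntegrable_velocity hS hr) (hy.intervalIntegrable_velocity hS hr)]
  refine norm_integral_le_of_norm_le hr.1 (ae_of_all _ fun s hs => ?_) ?_
  · have hs' := hsub (Ioc_subset_Icc_self hs)
    exact hS.norm_velocity_sub_le hs' _ _ (hu s hs') (huv s hs')
  · refine ContinuousOn.intervalIntegrable_of_Icc hr.1 ?_
    exact ((hdist.mono hsub).const_mul _).add continuousOn_const

end IsTrajectory

end Trajectory

section Gramian

theorem norm_comp_adjoint_sub_le {𝕜 E F : Type*} [RCLike 𝕜] [NormedAddCommGroup E]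
    [InnerProductSpace 𝕜 E] [CompleteSpace E] [NormedAddCommGroup F] [InnerProductSpace 𝕜 F]
    [CompleteSpace F] (A C : F →L[𝕜] E) :
    ‖A.comp (ContinuousLinearMap.adjoint A) - C.comp (ContinuousLinearMap.adjoint C)‖
      ≤ (‖A‖ + ‖C‖) * ‖A - C‖ := by
  have hsplit : A.comp (ContinuousLinearMap.adjoint A) - C.comp (ContinuousLinearMap.adjoint C)
      = A.comp (ContinuousLinearMap.adjoint (A - C))
        + (A - C).comp (ContinuousLinearMap.adjoint C) := by
    rw [map_sub, ContinuousLinearMap.comp_sub, ContinuousLinearMap.sub_comp, sub_add_sub_cancel]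
  rw [hsplit]
  refine (norm_add_le_of_le (ContinuousLinearMap.opNorm_comp_le _ _)
    (ContinuousLinearMap.opNorm_comp_le _ _)).trans_eq ?_
  rw [LinearIsometryEquiv.norm_map, LinearIsometryEquiv.norm_map]
  ring

variable {E F : Type*} [NormedAddCommGroup E] [InnerProductSpace ℝ E] [NormedAddCommGroup F]
  [InnerProductSpace ℝ F] {t₀ T : ℝ} {Λ₁ Λ₂ L β : ℝ≥0} {N : ℝ → E → E} {Φ : ℝ → ℝ → E → E}
  {B : ℝ → E → F →L[ℝ] E} {x₀ : E} {u v : ℝ → F} {x y : ℝ → E}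

/-- The input operator along the path `x`, transported to the final time `T` by the derivative of
the flow: `K_x(t) = DΦ_{t,T}(x(t)) B(t, x(t))`. -/
noncomputable def transportedInput (T : ℝ) (Φ : ℝ → ℝ → E → E) (B : ℝ → E → F →L[ℝ] E) (x : ℝ → E)
    (t : ℝ) : F →L[ℝ] E :=
  (fderiv ℝ (Φ t T) (x t)).comp (B t (x t))

/-- The controllability Gramian `∫_{t₀}^T K_x(t) K_x(t)* dt` of the system along the path `x`. -/
noncomputable def gramian [CompleteSpace E] [CompleteSpace F] (t₀ T : ℝ) (Φ : ℝ → ℝ → E → E)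
    (B : ℝ → E → F →L[ℝ] E) (x : ℝ → E) : E →L[ℝ] E :=
  ∫ t in t₀..T, (transportedInput T Φ B x t).comp
    (ContinuousLinearMap.adjoint (transportedInput T Φ B x t))

/-- The Lipschitz constant of the map sending a control, bounded by `ζ`, to the Gramian along its
trajectory. It integrates the product of the bounds on `‖K_x‖ + ‖K_y‖`, on the Lipschitz constant of
`K` in the state, and on the distance of two trajectories. -/
noncomputable def gramianModulus (t₀ T Λ₁ Λ₂ L β ζ : ℝ) : ℝ :=
  ∫ t in t₀..T, 2 * (Real.exp (Λ₁ * (T - t)) * β)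
    * ((Real.exp (Λ₁ * (T - t)) * L + flowDerivLipschitzConst Λ₁ Λ₂ (T - t) * β)
      * (gronwallBound 0 (Λ₁ + L * ζ) 1 (t - t₀) * β))

namespace IsDifferentiableFlow

theorem norm_transportedInput_le (hΦ : IsDifferentiableFlow t₀ T N Φ)
    (hS : IsControlSystem t₀ T Λ₁ L β N B) {t : ℝ} (ht : t ∈ Icc t₀ T) (x : ℝ → E) :
    ‖transportedInput T Φ B x t‖ ≤ Real.exp (Λ₁ * (T - t)) * β :=
  (ContinuousLinearMap.opNorm_comp_le _ _).trans <|
    mul_le_mul (hΦ.norm_fderiv_le hS.lipschitzWith_drift ht (right_mem_Icc.2 ht.2) _)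
      (hS.norm_input_le t ht _) (norm_nonneg _) (Real.exp_pos _).le

theorem norm_transportedInput_sub_le (hΦ : IsDifferentiableFlow t₀ T N Φ)
    (hS : IsControlSystem t₀ T Λ₁ L β N B) (hDN : ∀ t, LipschitzWith Λ₂ (fderiv ℝ (N t))) {t : ℝ}
    (ht : t ∈ Icc t₀ T) (x y : ℝ → E) :
    ‖transportedInput T Φ B x t - transportedInput T Φ B y t‖
      ≤ (Real.exp (Λ₁ * (T - t)) * L + flowDerivLipschitzConst Λ₁ Λ₂ (T - t) * β)
        * ‖x t - y t‖ := by
  have hT : T ∈ Icc t T := right_mem_Icc.2 ht.2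
  have hsplit : transportedInput T Φ B x t - transportedInput T Φ B y t
      = (fderiv ℝ (Φ t T) (x t)).comp (B t (x t) - B t (y t))
        + (fderiv ℝ (Φ t T) (x t) - fderiv ℝ (Φ t T) (y t)).comp (B t (y t)) := by
    simp only [transportedInput, ContinuousLinearMap.comp_sub, ContinuousLinearMap.sub_comp,
      sub_add_sub_cancel]
  have hflow := hΦ.norm_fderiv_sub_le hS.lipschitzWith_drift hDN ht hT (x t) (y t)
  rw [hsplit]
  calc _ ≤ ‖fderiv ℝ (Φ t T) (x t)‖ * ‖B t (x t) - B t (y t)‖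
        + ‖fderiv ℝ (Φ t T) (x t) - fderiv ℝ (Φ t T) (y t)‖ * ‖B t (y t)‖ :=
      norm_add_le_of_le (ContinuousLinearMap.opNorm_comp_le _ _)
        (ContinuousLinearMap.opNorm_comp_le _ _)
    _ ≤ Real.exp (Λ₁ * (T - t)) * (L * ‖x t - y t‖)
        + flowDerivLipschitzConst Λ₁ Λ₂ (T - t) * ‖x t - y t‖ * β := by
      gcongr
      · exact hΦ.norm_fderiv_le hS.lipschitzWith_drift ht hT _
      · exact (hS.lipschitzWith_input t).norm_sub_le _ _
      · exact (norm_nonneg _).trans hflow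
      · exact hS.norm_input_le t ht _
    _ = _ := by ring

variable [CompleteSpace E] [CompleteSpace F]

theorem intervalIntegrable_gramian (hΦ : IsDifferentiableFlow t₀ T N Φ)
    (hS : IsControlSystem t₀ T Λ₁ L β N B) (hDN : ∀ t, LipschitzWith Λ₂ (fderiv ℝ (N t)))
    (h : t₀ ≤ T) (hx : ContinuousOn x (Icc t₀ T)) :
    IntervalIntegrable (fun t => (transportedInput T Φ B x t).comp
      (ContinuousLinearMap.adjoint (transportedInput T Φ B x t))) volume t₀ T := by
  have hderiv : AEStronglyMeasurable (fun t => fderiv ℝ (Φ t T) (x t))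
      (volume.restrict (Icc t₀ T)) :=
    (hΦ.continuousOn_fderiv_comp hS.lipschitzWith_drift hDN hx).aestronglyMeasurable_of_isCompact
      isCompact_Icc measurableSet_Icc
  have hinput : AEStronglyMeasurable (fun t => B t (x t)) (volume.restrict (Icc t₀ T)) :=
    aestronglyMeasurable_comp_of_caratheodory hS.stronglyMeasurable_input
      (fun t => (hS.lipschitzWith_input t).continuous) hx
  have hK : AEStronglyMeasurable (transportedInput T Φ B x) (volume.restrict (Icc t₀ T)) :=
    isBoundedBilinearMap_comp.continuous.comp_aestronglyMeasurable (hderiv.prodMk hinput)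
  have hKadj := ContinuousLinearMap.adjoint.continuous.comp_aestronglyMeasurable hK
  refine intervalIntegrable_of_norm_le (C := (Real.exp (Λ₁ * (T - t₀)) * β) ^ 2) h
    (isBoundedBilinearMap_comp.continuous.comp_aestronglyMeasurable (hK.prodMk hKadj))
    fun t ht => ?_
  have hKt : ‖transportedInput T Φ B x t‖ ≤ Real.exp (Λ₁ * (T - t₀)) * β := by
    refine (hΦ.norm_transportedInput_le hS ht x).trans ?_
    gcongr
    exact ht.1
  refine (ContinuousLinearMap.opNorm_comp_le _ _).trans ?_
  rw [LinearIsometryEquiv.norm_map, ← sq]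
  gcongr

theorem norm_gramian_sub_le (hΦ : IsDifferentiableFlow t₀ T N Φ)
    (hS : IsControlSystem t₀ T Λ₁ L β N B) (hDN : ∀ t, LipschitzWith Λ₂ (fderiv ℝ (N t)))
    (h : t₀ ≤ T) (hx : IsTrajectory t₀ T N B x₀ u x) (hy : IsTrajectory t₀ T N B x₀ v y)
    {ζ : ℝ≥0} {δ : ℝ} (hu : ∀ t ∈ Icc t₀ T, ‖u t‖ ≤ ζ) (huv : ∀ t ∈ Icc t₀ T, ‖u t - v t‖ ≤ δ) :
    ‖gramian t₀ T Φ B x - gramian t₀ T Φ B y‖ ≤ gramianModulus t₀ T Λ₁ Λ₂ L β ζ * δ := by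
  rw [gramian, gramian, gramianModulus, ← intervalIntegral.integral_mul_const,
    ← integral_sub (hΦ.intervalIntegrable_gramian hS hDN h hx.continuousOn)
      (hΦ.intervalIntegrable_gramian hS hDN h hy.continuousOn)]
  refine norm_integral_le_of_norm_le h (ae_of_all _ fun t ht => ?_)
    (Continuous.intervalIntegrable (by fun_prop) _ _)
  have ht' : t ∈ Icc t₀ T := Ioc_subset_Icc_self ht
  have hflow : 0 ≤ flowDerivLipschitzConst Λ₁ Λ₂ (T - t) :=
    flowDerivLipschitzConst_nonneg Λ₁.2 Λ₂.2 (sub_nonneg.2 ht'.2)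
  calc _ ≤ (‖transportedInput T Φ B x t‖ + ‖transportedInput T Φ B y t‖)
        * ‖transportedInput T Φ B x t - transportedInput T Φ B y t‖ :=
      norm_comp_adjoint_sub_le _ _
    _ ≤ (Real.exp (Λ₁ * (T - t)) * β + Real.exp (Λ₁ * (T - t)) * β)
        * ((Real.exp (Λ₁ * (T - t)) * L + flowDerivLipschitzConst Λ₁ Λ₂ (T - t) * β)
          * (gronwallBound 0 (Λ₁ + L * ζ) 1 (t - t₀) * (β * δ))) := by
      gcongr
      · exact hΦ.norm_transportedInput_le hS ht' x
      · exact hΦ.norm_transportedInput_le hS ht' y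
      · exact (hΦ.norm_transportedInput_sub_le hS hDN ht' x y).trans
          (mul_le_mul_of_nonneg_left (hx.norm_sub_le hy hS hu huv ht') (by positivity))
    _ = _ := by ring

end IsDifferentiableFlow

end Gramian

section LipschitzConst

theorem integral_exp_add {a b m n : ℝ} (h : n ≠ m) :
    ∫ t in a..b, Real.exp (m * (b - t) + n * (t - a))
      = (Real.exp (n * (b - a)) - Real.exp (m * (b - a))) / (n - m) := by
  have hnm : n - m ≠ 0 := sub_ne_zero.2 h
  have hlin : ∀ t, HasDerivAt (fun t => m * (b - t) + n * (t - a)) (n - m) t := fun t =>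
    ((((hasDerivAt_id t).const_sub b).const_mul m).add
      (((hasDerivAt_id t).sub_const a).const_mul n)).congr_deriv (by ring)
  have hderiv : ∀ t, HasDerivAt (fun t => Real.exp (m * (b - t) + n * (t - a)) / (n - m))
      (Real.exp (m * (b - t) + n * (t - a))) t := fun t =>
    ((hlin t).exp.div_const (n - m)).congr_deriv (mul_div_cancel_right₀ _ hnm)
  rw [integral_eq_sub_of_hasDerivAt (fun t _ => hderiv t)
    (Continuous.intervalIntegrable (by fun_prop) _ _)]
  simp only [sub_self, mul_zero, zero_add, add_zero, sub_div]

theorem exp_sub_exp_div_sub_nonneg {D : ℝ} (hD : 0 ≤ D) (a b : ℝ) :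
    0 ≤ (Real.exp (a * D) - Real.exp (b * D)) / (a - b) := by
  have hmono : MonotoneOn (fun r => Real.exp (r * D)) univ := fun r _ s _ hrs =>
    Real.exp_le_exp.2 (mul_le_mul_of_nonneg_right hrs hD)
  simpa only [slope_def_field] using hmono.slope_nonneg (mem_univ b) (mem_univ a)

/-- The explicit Lipschitz constant `L_{𝒩₂}` of the paper, for the ball of radius `ζ` and the time
span `D = T - t₀`. -/
noncomputable def gramianLipschitzConst (D Λ₁ Λ₂ L β ζ : ℝ) : ℝ :=
  L * β ^ 2 * Real.exp (Λ₁ * D) / Λ₁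
      * ((Real.exp (Λ₁ * D) - Real.exp (L * ζ * D)) / (Λ₁ - L * ζ)
        - (Real.exp (L * ζ * D) - Real.exp (-(Λ₁ * D))) / (L * ζ + Λ₁))
    + 2 * β ^ 3 * Λ₂ * Real.exp (Λ₁ * D) / (Λ₁ * (Λ₁ + L * ζ))
      * ((Real.exp (2 * Λ₁ * D) - Real.exp (L * ζ * D)) / (2 * Λ₁ - L * ζ)
        + (Real.exp (Λ₁ * D) - Real.exp (L * ζ * D)) / (Λ₁ - L * ζ)
        + (Real.exp (Λ₁ * D) - Real.exp (-(Λ₁ * D))) / (2 * Λ₁)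
        - (Real.exp (2 * Λ₁ * D) - Real.exp (-(Λ₁ * D))) / (3 * Λ₁))

variable {t₀ T Λ₁ Λ₂ L β ζ : ℝ}

theorem gramianModulus_eq_integral_exp (hΛ₁ : 0 < Λ₁) (hLζ : 0 ≤ L * ζ) :
    gramianModulus t₀ T Λ₁ Λ₂ L β ζ = ∫ t in t₀..T,
      (2 * β ^ 2 * L / (Λ₁ + L * ζ)
          * (Real.exp (2 * Λ₁ * (T - t) + (Λ₁ + L * ζ) * (t - t₀))
            - Real.exp (2 * Λ₁ * (T - t) + 0 * (t - t₀)))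
        + 2 * β ^ 3 * Λ₂ / (Λ₁ * (Λ₁ + L * ζ))
          * (Real.exp (3 * Λ₁ * (T - t) + (Λ₁ + L * ζ) * (t - t₀))
            - Real.exp (2 * Λ₁ * (T - t) + (Λ₁ + L * ζ) * (t - t₀))
            - (Real.exp (3 * Λ₁ * (T - t) + 0 * (t - t₀))
              - Real.exp (2 * Λ₁ * (T - t) + 0 * (t - t₀))))) := by
  have hsum : Λ₁ + L * ζ ≠ 0 := by positivity
  refine integral_congr fun t _ => ?_
  have hexp₂ : Real.exp (2 * Λ₁ * (T - t)) = Real.exp (Λ₁ * (T - t)) ^ 2 := by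
    rw [← Real.exp_nat_mul, mul_assoc, Nat.cast_ofNat]
  have hexp₃ : Real.exp (3 * Λ₁ * (T - t)) = Real.exp (Λ₁ * (T - t)) ^ 3 := by
    rw [← Real.exp_nat_mul, mul_assoc, Nat.cast_ofNat]
  simp only [flowDerivLipschitzConst, gronwallBound_of_K_ne_0 hΛ₁.ne', gronwallBound_of_K_ne_0 hsum,
    Real.exp_add, hexp₂, hexp₃, zero_mul, Real.exp_zero]
  field_simp
  ring

theorem gramianModulus_eq (hΛ₁ : 0 < Λ₁) (hLζ : 0 ≤ L * ζ) (hne₁ : L * ζ ≠ Λ₁)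
    (hne₂ : L * ζ ≠ 2 * Λ₁) :
    gramianModulus t₀ T Λ₁ Λ₂ L β ζ
      = 2 * β ^ 2 * L / (Λ₁ + L * ζ)
          * ((Real.exp ((Λ₁ + L * ζ) * (T - t₀)) - Real.exp (2 * Λ₁ * (T - t₀)))
              / (Λ₁ + L * ζ - 2 * Λ₁)
            - (Real.exp (0 * (T - t₀)) - Real.exp (2 * Λ₁ * (T - t₀))) / (0 - 2 * Λ₁))
        + 2 * β ^ 3 * Λ₂ / (Λ₁ * (Λ₁ + L * ζ))
          * ((Real.exp ((Λ₁ + L * ζ) * (T - t₀)) - Real.exp (3 * Λ₁ * (T - t₀)))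
              / (Λ₁ + L * ζ - 3 * Λ₁)
            - (Real.exp ((Λ₁ + L * ζ) * (T - t₀)) - Real.exp (2 * Λ₁ * (T - t₀)))
              / (Λ₁ + L * ζ - 2 * Λ₁)
            - ((Real.exp (0 * (T - t₀)) - Real.exp (3 * Λ₁ * (T - t₀))) / (0 - 3 * Λ₁)
              - (Real.exp (0 * (T - t₀)) - Real.exp (2 * Λ₁ * (T - t₀))) / (0 - 2 * Λ₁))) := by
  have hint : ∀ m n : ℝ, IntervalIntegrable
      (fun t => Real.exp (m * (T - t) + n * (t - t₀))) volume t₀ T := fun m n =>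
    Continuous.intervalIntegrable (by fun_prop) _ _
  have hdiff : ∀ m n m' n' : ℝ, IntervalIntegrable (fun t => Real.exp (m * (T - t) + n * (t - t₀))
      - Real.exp (m' * (T - t) + n' * (t - t₀))) volume t₀ T := fun m n m' n' =>
    (hint m n).sub (hint m' n')
  rw [gramianModulus_eq_integral_exp hΛ₁ hLζ,
    integral_add ((hdiff _ _ _ _).const_mul _) (((hdiff _ _ _ _).sub (hdiff _ _ _ _)).const_mul _),
    intervalIntegral.integral_const_mul, intervalIntegral.integral_const_mul,
    integral_sub (hint _ _) (hint _ _), integral_sub (hdiff _ _ _ _) (hdiff _ _ _ _),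
    integral_sub (hint _ _) (hint _ _), integral_sub (hint _ _) (hint _ _),
    integral_exp_add (n := Λ₁ + L * ζ) (fun h => hne₁ (by linarith)),
    integral_exp_add (n := Λ₁ + L * ζ) (fun h => hne₂ (by linarith)),
    integral_exp_add (by linarith), integral_exp_add (by linarith)]

-- The paper's constant is larger than the integral: the term `(e^{Λ₁D} - e^{LζD}) / (Λ₁ - Lζ)` in
-- its second bracket carries the opposite sign.
theorem gramianLipschitzConst_eq_gramianModulus_add (hΛ₁ : 0 < Λ₁) (hLζ : 0 ≤ L * ζ)
    (hne₁ : L * ζ ≠ Λ₁) (hne₂ : L * ζ ≠ 2 * Λ₁) :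
    gramianLipschitzConst (T - t₀) Λ₁ Λ₂ L β ζ = gramianModulus t₀ T Λ₁ Λ₂ L β ζ
      + 2 * (2 * β ^ 3 * Λ₂ * Real.exp (Λ₁ * (T - t₀)) / (Λ₁ * (Λ₁ + L * ζ)))
        * ((Real.exp (Λ₁ * (T - t₀)) - Real.exp (L * ζ * (T - t₀))) / (Λ₁ - L * ζ)) := by
  rw [gramianModulus_eq hΛ₁ hLζ hne₁ hne₂, gramianLipschitzConst]
  have hsum : Λ₁ + L * ζ ≠ 0 := by positivity
  have hsub₁ : Λ₁ - L * ζ ≠ 0 := sub_ne_zero.2 hne₁.symm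
  have hsub₂ : 2 * Λ₁ - L * ζ ≠ 0 := sub_ne_zero.2 hne₂.symm
  have hexp₂ : Real.exp (2 * Λ₁ * (T - t₀)) = Real.exp (Λ₁ * (T - t₀)) ^ 2 := by
    rw [← Real.exp_nat_mul, mul_assoc, Nat.cast_ofNat]
  have hexp₃ : Real.exp (3 * Λ₁ * (T - t₀)) = Real.exp (Λ₁ * (T - t₀)) ^ 3 := by
    rw [← Real.exp_nat_mul, mul_assoc, Nat.cast_ofNat]
  rw [add_mul Λ₁, Real.exp_add, hexp₂, hexp₃, Real.exp_neg, zero_mul, Real.exp_zero,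
    show Λ₁ + L * ζ - 2 * Λ₁ = -(Λ₁ - L * ζ) by ring,
    show Λ₁ + L * ζ - 3 * Λ₁ = -(2 * Λ₁ - L * ζ) by ring, add_comm (L * ζ) Λ₁, zero_sub, zero_sub]
  have hexp := Real.exp_ne_zero (Λ₁ * (T - t₀))
  generalize Real.exp (Λ₁ * (T - t₀)) = X at *
  generalize Real.exp (L * ζ * (T - t₀)) = Y at *
  generalize L * ζ = b at *
  field_simp
  ring

theorem gramianModulus_le_gramianLipschitzConst (h : t₀ ≤ T) (hΛ₁ : 0 < Λ₁) (hΛ₂ : 0 ≤ Λ₂)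
    (hβ : 0 ≤ β) (hLζ : 0 ≤ L * ζ) (hne₁ : L * ζ ≠ Λ₁) (hne₂ : L * ζ ≠ 2 * Λ₁) :
    gramianModulus t₀ T Λ₁ Λ₂ L β ζ ≤ gramianLipschitzConst (T - t₀) Λ₁ Λ₂ L β ζ := by
  rw [gramianLipschitzConst_eq_gramianModulus_add hΛ₁ hLζ hne₁ hne₂]
  have hslope := exp_sub_exp_div_sub_nonneg (sub_nonneg.2 h) Λ₁ (L * ζ)
  exact le_add_of_nonneg_right (mul_nonneg (by positivity) hslope)

end LipschitzConst

section GramianMap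

theorem lipschitzWith_fderiv_of_contDiff_two {𝕜 E G : Type*} [RCLike 𝕜] [NormedAddCommGroup E]
    [NormedSpace 𝕜 E] [NormedAddCommGroup G] [NormedSpace 𝕜 G] {f : E → G} {C : ℝ≥0}
    (hf : ContDiff 𝕜 2 f) (hC : ∀ x, ‖fderiv 𝕜 (fderiv 𝕜 f) x‖ ≤ C) :
    LipschitzWith C (fderiv 𝕜 f) :=
  lipschitzWith_of_nnnorm_fderiv_le
    ((hf.fderiv_right (m := 1) one_add_one_eq_two.le).differentiable one_ne_zero) hC

theorem le_supIcc {a b C : ℝ} {f : ℝ → ℝ} (hC : ∀ t ∈ Icc a b, f t ≤ C) {t : ℝ}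
    (ht : t ∈ Icc a b) : f t ≤ supIcc a b f :=
  le_csSup ⟨C, forall_mem_image.2 hC⟩ (mem_image_of_mem f ht)

theorem IsTrajectory.norm_control_sub_le_supIcc {E F : Type*} [NormedAddCommGroup E]
    [NormedSpace ℝ E] [NormedAddCommGroup F] [NormedSpace ℝ F] {t₀ T : ℝ} {N : ℝ → E → E}
    {B : ℝ → E → F →L[ℝ] E} {x₀ y₀ : E} {u v : ℝ → F} {x y : ℝ → E}
    (hx : IsTrajectory t₀ T N B x₀ u x) (hy : IsTrajectory t₀ T N B y₀ v y) {t : ℝ}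
    (ht : t ∈ Icc t₀ T) : ‖u t - v t‖ ≤ supIcc t₀ T (fun t => ‖u t - v t‖) := by
  obtain ⟨Mu, hMu⟩ := hx.bounded_control
  obtain ⟨Mv, hMv⟩ := hy.bounded_control
  exact le_supIcc (fun s hs => norm_sub_le_of_le (hMu s hs) (hMv s hs)) ht

variable {E F : Type*} [NormedAddCommGroup E] [InnerProductSpace ℝ E] [CompleteSpace E]
  [NormedAddCommGroup F] [InnerProductSpace ℝ F] [CompleteSpace F] {t₀ T : ℝ} {Λ₁ Λ₂ L β ζ : ℝ≥0}
  {N : ℝ → E → E} {Φ : ℝ → ℝ → E → E} {B : ℝ → E → F →L[ℝ] E} {x₀ : E} {u v : ℝ → F}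
  {x y : ℝ → E}

namespace IsDifferentiableFlow

theorem norm_gramian_sub_le_mul_supIcc (hΦ : IsDifferentiableFlow t₀ T N Φ)
    (hS : IsControlSystem t₀ T Λ₁ L β N B) (hDN : ∀ t, LipschitzWith Λ₂ (fderiv ℝ (N t)))
    (h : t₀ ≤ T) (hx : IsTrajectory t₀ T N B x₀ u x) (hy : IsTrajectory t₀ T N B x₀ v y)
    (hu : ∀ t ∈ Icc t₀ T, ‖u t‖ ≤ ζ) :
    ‖gramian t₀ T Φ B x - gramian t₀ T Φ B y‖
      ≤ gramianModulus t₀ T Λ₁ Λ₂ L β ζ * supIcc t₀ T (fun t => ‖u t - v t‖) :=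
  hΦ.norm_gramian_sub_le hS hDN h hx hy hu fun _ ht => hx.norm_control_sub_le_supIcc hy ht

theorem exists_norm_gramian_sub_lt (hΦ : IsDifferentiableFlow t₀ T N Φ)
    (hS : IsControlSystem t₀ T Λ₁ L β N B) (hDN : ∀ t, LipschitzWith Λ₂ (fderiv ℝ (N t)))
    (h : t₀ ≤ T) (hx : IsTrajectory t₀ T N B x₀ u x) {ε : ℝ} (hε : 0 < ε) :
    ∃ δ > 0, ∀ {v y}, IsTrajectory t₀ T N B x₀ v y →
      supIcc t₀ T (fun t => ‖u t - v t‖) < δ →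
      ‖gramian t₀ T Φ B x - gramian t₀ T Φ B y‖ < ε := by
  obtain ⟨M, hM⟩ := hx.bounded_control
  set C : ℝ := gramianModulus t₀ T Λ₁ Λ₂ L β M.toNNReal
  obtain ⟨δ, hδ, hCδ⟩ := exists_pos_mul_lt hε |C|
  refine ⟨δ, hδ, fun {v y} hy hlt => ?_⟩
  have hsup : 0 ≤ supIcc t₀ T (fun t => ‖u t - v t‖) :=
    (norm_nonneg _).trans (hx.norm_control_sub_le_supIcc hy (left_mem_Icc.2 h))
  calc ‖gramian t₀ T Φ B x - gramian t₀ T Φ B y‖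
      ≤ C * supIcc t₀ T (fun t => ‖u t - v t‖) :=
        hΦ.norm_gramian_sub_le_mul_supIcc hS hDN h hx hy
          fun t ht => (hM t ht).trans (Real.le_coe_toNNReal M)
    _ ≤ |C| * δ := mul_le_mul (le_abs_self C) hlt.le hsup (abs_nonneg C)
    _ < ε := hCδ

end IsDifferentiableFlow

theorem stmt13_general (h : t₀ ≤ T) (hΛ₁ : 0 < (Λ₁ : ℝ)) (hΦ : IsDifferentiableFlow t₀ T N Φ)
    (hS : IsControlSystem t₀ T Λ₁ L β N B) (hDN : ∀ t, LipschitzWith Λ₂ (fderiv ℝ (N t))) :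
    (∀ {u x}, IsTrajectory t₀ T N B x₀ u x → ∀ ε > 0, ∃ δ > 0, ∀ {v y},
      IsTrajectory t₀ T N B x₀ v y → supIcc t₀ T (fun t => ‖u t - v t‖) < δ →
      ‖gramian t₀ T Φ B x - gramian t₀ T Φ B y‖ < ε) ∧
    (∀ {ζ : ℝ≥0}, (L * ζ : ℝ) ≠ Λ₁ → (L * ζ : ℝ) ≠ 2 * Λ₁ → ∀ {u v x y},
      IsTrajectory t₀ T N B x₀ u x → IsTrajectory t₀ T N B x₀ v y →
      (∀ t ∈ Icc t₀ T, ‖u t‖ ≤ ζ) →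
      ‖gramian t₀ T Φ B x - gramian t₀ T Φ B y‖
        ≤ gramianLipschitzConst (T - t₀) Λ₁ Λ₂ L β ζ * supIcc t₀ T (fun t => ‖u t - v t‖)) := by
  refine ⟨fun hx ε hε => hΦ.exists_norm_gramian_sub_lt hS hDN h hx hε,
    fun {ζ} hne₁ hne₂ {u v x y} hx hy hu => ?_⟩
  refine (hΦ.norm_gramian_sub_le_mul_supIcc hS hDN h hx hy hu).trans ?_
  gcongr
  · exact (norm_nonneg _).trans (hx.norm_control_sub_le_supIcc hy (left_mem_Icc.2 h))
  · exact gramianModulus_le_gramianLipschitzConst h hΛ₁ Λ₂.2 β.2 (mul_nonneg L.2 ζ.2) hne₁ hne₂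

end GramianMap

/-- The Gramian map `𝒩₂` is continuous on `L^∞((t₀,T);ℝ^k)` and globally
Lipschitz on the ball `{‖u‖_∞ ≤ ζ₂}`, with the explicit Lipschitz constant `L_{𝒩₂}` of the
paper (assuming `L_Bζ₂ ∉ {Λ₁, 2Λ₁}`). -/
theorem stmt13
    (d k : ℕ) (t₀ T Λ₁ Λ₂ L_B Bsup : ℝ) (ht : t₀ < T) (hΛ₁ : 0 < Λ₁) (hΛ₂ : 0 < Λ₂)
    -- the drift N : bounded measurable in time, C² in space, with bounded derivatives
    (N : ℝ → EuclideanSpace ℝ (Fin d) → EuclideanSpace ℝ (Fin d))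
    (hNmeas : ∀ x, Measurable fun t => N t x)
    (hNbdd : ∀ x, ∃ M : ℝ, ∀ t ∈ Icc t₀ T, ‖N t x‖ ≤ M)
    (hNC2 : ∀ t, ContDiff ℝ 2 (N t))
    (hDN : ∀ t w, ‖fderiv ℝ (N t) w‖ ≤ Λ₁)
    (hD2N : ∀ t w, ‖fderiv ℝ (fderiv ℝ (N t)) w‖ ≤ Λ₂)
    -- the nonautonomous flow Φ of N and its spatial derivative DΦ
    (Φ : ℝ → ℝ → EuclideanSpace ℝ (Fin d) → EuclideanSpace ℝ (Fin d))
    (DΦ : ℝ → ℝ → EuclideanSpace ℝ (Fin d) →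
      (EuclideanSpace ℝ (Fin d) →L[ℝ] EuclideanSpace ℝ (Fin d)))
    (hflow_init : ∀ s x, Φ s s x = x)
    (hflow_ode : ∀ s x, ∀ t ∈ Icc t₀ T, HasDerivAt (fun τ' => Φ s τ' x) (N t (Φ s t x)) t)
    (hgroup : ∀ t₁ t₂ t₃ : ℝ, ∀ x, Φ t₂ t₃ (Φ t₁ t₂ x) = Φ t₁ t₃ x)
    (hΦC2 : ∀ s t : ℝ, ContDiff ℝ 2 (Φ s t))
    (hDΦ_fderiv : ∀ s t x, DΦ s t x = fderiv ℝ (Φ s t) x)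
    (hDΦ_init : ∀ s x, DΦ s s x = ContinuousLinearMap.id ℝ (EuclideanSpace ℝ (Fin d)))
    (hDΦ_ode : ∀ s x, ∀ t ∈ Icc t₀ T,
      HasDerivAt (fun τ' => DΦ s τ' x) ((fderiv ℝ (N t) (Φ s t x)).comp (DΦ s t x)) t)
    -- the input matrix B : bounded measurable, C¹ in x with bounded derivative
    (Bm : ℝ → EuclideanSpace ℝ (Fin d) →
      (EuclideanSpace ℝ (Fin k) →L[ℝ] EuclideanSpace ℝ (Fin d)))
    (hBmeas : ∀ x, Measurable fun t => Bm t x)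
    (hBsup : ∀ t ∈ Icc t₀ T, ∀ x, ‖Bm t x‖ ≤ Bsup)
    (hBC1 : ∀ t, ContDiff ℝ 1 (Bm t))
    (hDB : ∀ t w, ‖fderiv ℝ (Bm t) w‖ ≤ L_B)
    -- the solution map u ↦ x_u of (Σ) with initial state x⁰
    (x0 : EuclideanSpace ℝ (Fin d))
    (xSol : (ℝ → EuclideanSpace ℝ (Fin k)) → ℝ → EuclideanSpace ℝ (Fin d))
    (hxSol : ∀ u, Adm t₀ T u →
      ContinuousOn (xSol u) (Icc t₀ T) ∧ xSol u t₀ = x0 ∧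
      ∀ t ∈ Icc t₀ T, xSol u t = x0 + ∫ s in t₀..t, (N s (xSol u s) + Bm s (xSol u s) (u s)))
    -- second derivative of the flow (second variational equation)
    (D2Φ : ℝ → ℝ → EuclideanSpace ℝ (Fin d) →
      (EuclideanSpace ℝ (Fin d) →L[ℝ]
        (EuclideanSpace ℝ (Fin d) →L[ℝ] EuclideanSpace ℝ (Fin d))))
    (hD2Φ_init : ∀ s x, D2Φ s s x = 0)
    (hD2Φ_ode : ∀ s x, ∀ t ∈ Icc t₀ T, ∀ v w : EuclideanSpace ℝ (Fin d),
      HasDerivAt (fun τ' => D2Φ s τ' x v w)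
        (fderiv ℝ (N t) (Φ s t x) (D2Φ s t x v w)
          + fderiv ℝ (fderiv ℝ (N t)) (Φ s t x) (DΦ s t x v) (DΦ s t x w)) t)
    -- the radius ζ₂ of the ball, with the nondegeneracy side conditions
    (zeta2 : ℝ) (hzeta2 : 0 < zeta2)
    (hne1 : L_B * zeta2 ≠ Λ₁) (hne2 : L_B * zeta2 ≠ 2 * Λ₁) :
    -- 𝒩₂ is continuous on L^∞
    (∀ u, Adm t₀ T u → ∀ ε > (0:ℝ), ∃ δ > (0:ℝ), ∀ v, Adm t₀ T v →
      supIcc t₀ T (fun t => ‖u t - v t‖) < δ →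
      ‖gram t₀ T T DΦ Bm (xSol u) - gram t₀ T T DΦ Bm (xSol v)‖ < ε) ∧
    -- 𝒩₂ is Lipschitz on the ball {‖u‖_∞ ≤ ζ₂}, with the explicit constant L_{𝒩₂}
    (∀ u v : ℝ → EuclideanSpace ℝ (Fin k), Adm t₀ T u → Adm t₀ T v →
      (∀ t ∈ Icc t₀ T, ‖u t‖ ≤ zeta2) → (∀ t ∈ Icc t₀ T, ‖v t‖ ≤ zeta2) →
      ‖gram t₀ T T DΦ Bm (xSol u) - gram t₀ T T DΦ Bm (xSol v)‖
        ≤ (L_B * Bsup ^ 2 * Real.exp (Λ₁ * (T - t₀)) / Λ₁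
            * ((Real.exp (Λ₁ * (T - t₀)) - Real.exp (L_B * zeta2 * (T - t₀)))
                  / (Λ₁ - L_B * zeta2)
               - (Real.exp (L_B * zeta2 * (T - t₀)) - Real.exp (-(Λ₁ * (T - t₀))))
                  / (L_B * zeta2 + Λ₁))
          + 2 * Bsup ^ 3 * Λ₂ * Real.exp (Λ₁ * (T - t₀)) / (Λ₁ * (Λ₁ + L_B * zeta2))
            * ((Real.exp (2 * Λ₁ * (T - t₀)) - Real.exp (L_B * zeta2 * (T - t₀)))
                  / (2 * Λ₁ - L_B * zeta2)
               + (Real.exp (Λ₁ * (T - t₀)) - Real.exp (L_B * zeta2 * (T - t₀)))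
                  / (Λ₁ - L_B * zeta2)
               + (Real.exp (Λ₁ * (T - t₀)) - Real.exp (-(Λ₁ * (T - t₀)))) / (2 * Λ₁)
               - (Real.exp (2 * Λ₁ * (T - t₀)) - Real.exp (-(Λ₁ * (T - t₀)))) / (3 * Λ₁)))
          * supIcc t₀ T (fun t => ‖u t - v t‖)) := by
  obtain rfl : DΦ = fun s t => fderiv ℝ (Φ s t) := funext₂ fun s t => funext (hDΦ_fderiv s t)
  lift Λ₁ to ℝ≥0 using hΛ₁.le
  lift Λ₂ to ℝ≥0 using hΛ₂.le
  lift L_B to ℝ≥0 using (hDB t₀ 0).trans' (ContinuousLinearMap.opNorm_nonneg _)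
  lift Bsup to ℝ≥0 using (hBsup t₀ (left_mem_Icc.2 ht.le) 0).trans' (norm_nonneg _)
  lift zeta2 to ℝ≥0 using hzeta2.le
  have hΦ : IsDifferentiableFlow t₀ T N Φ :=
    ⟨fun t => (hNC2 t).differentiable two_ne_zero,
      fun s t => (hΦC2 s t).differentiable two_ne_zero, hflow_init, hgroup,
      fun s _ x t ht => (hflow_ode s x t ht).hasDerivWithinAt,
      fun s _ x t ht => (hDΦ_ode s x t ht).hasDerivWithinAt⟩
  have hS : IsControlSystem t₀ T Λ₁ L_B Bsup N Bm :=
    ⟨fun x => (hNmeas x).stronglyMeasurable, hNbdd 0,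
      fun t => lipschitzWith_of_nnnorm_fderiv_le ((hNC2 t).differentiable two_ne_zero) (hDN t),
      fun x => (hBmeas x).stronglyMeasurable, hBsup,
      fun t => lipschitzWith_of_nnnorm_fderiv_le ((hBC1 t).differentiable one_ne_zero) (hDB t)⟩
  have htraj : ∀ u, Adm t₀ T u → IsTrajectory t₀ T N Bm x0 u (xSol u) := fun u hu =>
    ⟨hu.1.stronglyMeasurable, hu.2, (hxSol u hu).1, (hxSol u hu).2.2⟩
  obtain ⟨hcont, hlip⟩ := stmt13_general (x₀ := x0) ht.le hΛ₁ hΦ hS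
    fun t => lipschitzWith_fderiv_of_contDiff_two (hNC2 t) (hD2N t)
  exact ⟨fun u hu ε hε => (hcont (htraj u hu) ε hε).imp fun δ hδ =>
      ⟨hδ.1, fun v hv => hδ.2 (htraj v hv)⟩,
    fun u v hu hv hu_le _ => hlip hne1 hne2 (htraj u hu) (htraj v hv) hu_le⟩
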